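/- (Stable Clifford correspondence) Let k be an algebraically closed field, B ⊂ A algebras over k, V a finite-dimensional simple A-stable B-module, and E = End_A(V↑^A)^op. There is a one-to-one correspondence between isomorphism classes of finite-dimensional simple left E-modules and isomorphism classes of finite-dimensional simple A-modules containing a copy of V on restriction to B, induced by U ↦ V↑^A ⊗_E U. -/

import Mathlib

/-!
Write `M = V↑`, `i : V → M` for the unit `v ↦ 1 ⊗ v`, and `E = End_A(M)ᵒᵖ`.  The point is that
`M ⊗_E U` is, as a `B`-module, just `V ⊗_k U`, for every left `E`-module `U`.

Since `k` is algebraically closed and `V` is finite-dimensional and simple, Schur's lemma and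
Jacobson density show that `B` maps onto `End_k(V)` (`exists_smul_eq`), so `B` contains lifts of
the matrix units for a basis `(v_j)` of `V`.  Because `M` is isomorphic over `B` to a power of `V`,
these act on `M` as matrix units too, and Frobenius reciprocity `Hom_B(V, M) = End_A(M)` shows that
the image of a rank one idempotent of `B` is `End_A(M) · i v₀`.  This is recorded in the structure
`Frame` (see `exists_frame`), and everything else is deduced from a frame:

* every element of `M ⊗_E U` has the form `∑ j, i v_j ⊗ u_j` (`Frame.exists_eq_sum`), each
  `i v₀ ⊗ u_l` can be extracted from it by acting with `A` (`Frame.b_smul_sum`), and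
  `i v₀ ⊗ u = 0` only for `u = 0` (`Frame.eq_zero_of_mk`);
* hence `ψ : U → Hom_A(M, M ⊗_E U)` is bijective for every `U`, so that `U` is determined by
  `M ⊗_E U`; and `M ⊗_E U` is simple when `U` is, because a nonzero submodule contains some
  `i v₀ ⊗ u` with `u ≠ 0`, which generates everything under `A` and `E`;
* extracting coefficients in the same way shows that `φ : M ⊗_E Hom_A(M, N) → N` is injective for
  every `N`; if `N` is simple and contains `V`, then there is a nonzero, hence surjective,
  `f : M → N`, so `φ` is surjective, and every `g : M → N` factors as `f ∘ s`, so that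
  `Hom_A(M, N)` is simple.
-/

/-! ### Balanced tensor products, induced modules and the canonical maps -/

open TensorProduct Pointwise MulOpposite

set_option synthInstance.maxHeartbeats 1000000
set_option maxHeartbeats 2000000

noncomputable section

/-- The left module structure of `E = End_A(M)ᵐᵒᵖ` on `Hom_A(M,N)`, given by
precomposition: `e • f = f ∘ e.unop`. -/
instance endOpModuleHom (A M N : Type*) [Ring A] [AddCommGroup M] [Module A M]
    [AddCommGroup N] [Module A N] : Module (Module.End A M)ᵐᵒᵖ (M →ₗ[A] N) where
  smul e f := f ∘ₗ e.unop
  one_smul f := rfl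
  mul_smul e₁ e₂ f := rfl
  smul_zero e := rfl
  smul_add e f g := rfl
  add_smul e₁ e₂ f := by ext m; simp [HSMul.hSMul, SMul.smul]
  zero_smul f := by ext m; simp [HSMul.hSMul, SMul.smul]

theorem endOp_smul_hom_apply {A M N : Type*} [Ring A] [AddCommGroup M] [Module A M]
    [AddCommGroup N] [Module A N] (e : (Module.End A M)ᵐᵒᵖ) (f : M →ₗ[A] N) (m : M) :
    (e • f) m = f (e.unop m) := rfl

section Bal

variable (S : Type*) [Ring S] (Amb : Type*) [Ring Amb]
variable (M U : Type*) [AddCommGroup M] [AddCommGroup U]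
variable [Module S M] [Module Amb M] [Module Sᵐᵒᵖ U]

/-- The relations defining the balanced tensor product `M ⊗_{Sᵐᵒᵖ} U` of the
right `Sᵐᵒᵖ`-module `M` (i.e. left `S`-module) with the left `Sᵐᵒᵖ`-module `U`:
the elements `(m·s) ⊗ u - m ⊗ (s·u)`.  The ambient ring `Amb` acts on `M`
commuting with `S`, so the span over `Amb` coincides with the span over `ℤ`. -/
def balRel : Submodule Amb (M ⊗[ℤ] U) :=
  Submodule.span Amb
    {x | ∃ (s : S) (m : M) (u : U),
      x = (s • m) ⊗ₜ[ℤ] u - m ⊗ₜ[ℤ] ((MulOpposite.op s) • u)}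

/-- The balanced tensor product `M ⊗_{Sᵐᵒᵖ} U`, as an `Amb`-module. -/
def BalT := (M ⊗[ℤ] U) ⧸ balRel S Amb M U

instance : AddCommGroup (BalT S Amb M U) :=
  inferInstanceAs (AddCommGroup ((M ⊗[ℤ] U) ⧸ balRel S Amb M U))

instance : Module Amb (BalT S Amb M U) :=
  inferInstanceAs (Module Amb ((M ⊗[ℤ] U) ⧸ balRel S Amb M U))

instance (R : Type*) [Semiring R] [SMul R Amb] [Module R (M ⊗[ℤ] U)]
    [IsScalarTower R Amb (M ⊗[ℤ] U)] : Module R (BalT S Amb M U) :=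
  inferInstanceAs (Module R ((M ⊗[ℤ] U) ⧸ balRel S Amb M U))

instance (R : Type*) [Semiring R] [SMul R Amb] [Module R (M ⊗[ℤ] U)]
    [IsScalarTower R Amb (M ⊗[ℤ] U)] : IsScalarTower R Amb (BalT S Amb M U) :=
  inferInstanceAs (IsScalarTower R Amb ((M ⊗[ℤ] U) ⧸ balRel S Amb M U))

/-- The class of `m ⊗ u` in the balanced tensor product. -/
def BalT.mk (m : M) (u : U) : BalT S Amb M U :=
  Submodule.Quotient.mk (m ⊗ₜ[ℤ] u)

end Bal

section PhiPsi

variable (A M : Type*) [Ring A] [AddCommGroup M] [Module A M]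

/-- Evaluation `m ↦ (f ↦ f m)`, as an `A`-linear map into `ℤ`-linear maps. -/
def evMap (N : Type*) [AddCommGroup N] [Module A N] :
    M →ₗ[A] ((M →ₗ[A] N) →ₗ[ℤ] N) where
  toFun m :=
    { toFun := fun f => f m
      map_add' := fun _ _ => rfl
      map_smul' := fun _ _ => rfl }
  map_add' m₁ m₂ := by ext f; exact f.map_add _ _
  map_smul' a m := by ext f; exact f.map_smul a m

/-- The canonical `A`-linear map `φ : M ⊗_E Hom_A(M,N) → N`, `φ(m ⊗ f) = f m`,
where `E = End_A(M)ᵐᵒᵖ`.  `N` is static with respect to `M` iff `φ` is an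
isomorphism, i.e. iff `φ` is bijective. -/
def phiMap (N : Type*) [AddCommGroup N] [Module A N] :
    BalT (Module.End A M) A M (M →ₗ[A] N) →ₗ[A] N :=
  Submodule.liftQ _ (TensorProduct.AlgebraTensorModule.lift (evMap A M N)) (by
    rw [balRel, Submodule.span_le]
    rintro x ⟨s, m, f, rfl⟩
    simp only [SetLike.mem_coe, LinearMap.mem_ker, map_sub]
    have h1 : (TensorProduct.AlgebraTensorModule.lift (evMap A M N)) ((s • m) ⊗ₜ[ℤ] f)
        = f (s • m) := rfl
    have h2 : (TensorProduct.AlgebraTensorModule.lift (evMap A M N))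
        (m ⊗ₜ[ℤ] ((MulOpposite.op s) • f)) = f (s m) := rfl
    rw [h1, h2]
    exact sub_self _)

theorem phiMap_mk (N : Type*) [AddCommGroup N] [Module A N] (m : M) (f : M →ₗ[A] N) :
    phiMap A M N (BalT.mk _ _ _ _ m f) = f m := rfl

/-- `m ↦ m ⊗ u`, as an `A`-linear map `M → M ⊗[ℤ] U`. -/
def tmulRight (U : Type*) [AddCommGroup U] (u : U) : M →ₗ[A] (M ⊗[ℤ] U) where
  toFun m := m ⊗ₜ[ℤ] u
  map_add' _ _ := TensorProduct.add_tmul _ _ _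
  map_smul' a m := (TensorProduct.smul_tmul' a m u).symm

/-- The canonical map `ψ : U → Hom_A(M, M ⊗_E U)`, `ψ(u)(m) = m ⊗ u`, for a left
`E`-module `U`, where `E = End_A(M)ᵐᵒᵖ`.  `U` is static with respect to `M` iff
`ψ` is an isomorphism of `E`-modules. -/
def psiMap (U : Type*) [AddCommGroup U] [Module (Module.End A M)ᵐᵒᵖ U] :
    U → (M →ₗ[A] BalT (Module.End A M) A M U) := fun u =>
  (balRel (Module.End A M) A M U).mkQ ∘ₗ tmulRight A M U u

end PhiPsi

section Ind

variable {Bc Sc : Type*} [Ring Bc] [Ring Sc] (f : Bc →+* Sc)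
variable (V : Type*) [AddCommGroup V] [Module Bc V]

/-- The relations defining the induced module `V↑ = Sc ⊗_{Bc} V` along the ring
homomorphism `f : Bc →+* Sc`: the elements `(s·f(b)) ⊗ v - s ⊗ (b·v)`. -/
def indRel : Submodule Sc (Sc ⊗[ℤ] V) :=
  Submodule.span Sc
    {x | ∃ (s : Sc) (b : Bc) (v : V), x = (s * f b) ⊗ₜ[ℤ] v - s ⊗ₜ[ℤ] (b • v)}

/-- The induced module `V↑ = Sc ⊗_{Bc} V` along `f : Bc →+* Sc`, with the ring
`Sc` acting by multiplication on the first factor. -/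
def Ind := (Sc ⊗[ℤ] V) ⧸ indRel f V

instance : AddCommGroup (Ind f V) :=
  inferInstanceAs (AddCommGroup ((Sc ⊗[ℤ] V) ⧸ indRel f V))

instance : Module Sc (Ind f V) :=
  inferInstanceAs (Module Sc ((Sc ⊗[ℤ] V) ⧸ indRel f V))

instance (R : Type*) [Semiring R] [SMul R Sc] [Module R (Sc ⊗[ℤ] V)]
    [IsScalarTower R Sc (Sc ⊗[ℤ] V)] : Module R (Ind f V) :=
  inferInstanceAs (Module R ((Sc ⊗[ℤ] V) ⧸ indRel f V))

instance (R : Type*) [Semiring R] [SMul R Sc] [Module R (Sc ⊗[ℤ] V)]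
    [IsScalarTower R Sc (Sc ⊗[ℤ] V)] : IsScalarTower R Sc (Ind f V) :=
  inferInstanceAs (IsScalarTower R Sc ((Sc ⊗[ℤ] V) ⧸ indRel f V))

/-- The class of `s ⊗ v` in the induced module. -/
def Ind.mk (s : Sc) (v : V) : Ind f V := Submodule.Quotient.mk (s ⊗ₜ[ℤ] v)

/-- The canonical map `V → V↑`, `v ↦ 1 ⊗ v`. -/
def Ind.of (v : V) : Ind f V := Ind.mk f V 1 v

end Ind

universe u

/-! ### Matrix units acting on a module and its endomorphism ring -/

section Frame

variable {A M ι : Type*} [Ring A] [AddCommGroup M] [Module A M]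

/-- Data exhibiting `M` as a sum of copies of a column space `V = k^ι`, in terms of `A` only:
a generator `w` of `M` (thought of as `i v₀` for a map `i : V → M` and a fixed nonzero `v₀ ∈ V`),
together with elements of `A` acting on `V` as `a j : v₀ ↦ v_j` and `b j : x ↦ v_j^*(x) v₀`, where
`(v_j)` is a basis of `V` with dual basis `(v_j^*)`.  The field `exists_end` says that the image of
every `b j` on `M` lies in `End_A(M) · w`.  The base field does not occur. -/
structure Frame (A M ι : Type*) [Ring A] [AddCommGroup M] [Module A M] [Fintype ι] where
  w : M
  a : ι → A
  b : ι → A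
  span_w : Submodule.span A {w} = ⊤
  b_a_self : ∀ j, b j • a j • w = w
  b_a_ne : ∀ j l, j ≠ l → b j • a l • w = 0
  sum_a_b : ∀ m : M, ∑ j, a j • b j • m = m
  exists_end : ∀ j (m : M), ∃ s : Module.End A M, b j • m = s w

/-- The canonical map `ψ : U → Hom_A(M, M ⊗_E U)` as an additive map, so that
`BalT.mkHom A M U u m` is the class of `m ⊗ u`, additive in `u` and `A`-linear in `m`. -/
def BalT.mkHom (A M U : Type*) [Ring A] [AddCommGroup M] [Module A M] [AddCommGroup U]
    [Module (Module.End A M)ᵐᵒᵖ U] : U →+ (M →ₗ[A] BalT (Module.End A M) A M U) where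
  toFun := psiMap A M U
  map_zero' := by
    ext m
    change Submodule.Quotient.mk (m ⊗ₜ[ℤ] (0 : U)) = _
    rw [TensorProduct.tmul_zero]; rfl
  map_add' u₁ u₂ := by
    ext m
    change Submodule.Quotient.mk (m ⊗ₜ[ℤ] (u₁ + u₂)) = _
    rw [TensorProduct.tmul_add]; rfl

section
variable {U : Type*} [AddCommGroup U] [Module (Module.End A M)ᵐᵒᵖ U]

theorem BalT.mkHom_smul (e : (Module.End A M)ᵐᵒᵖ) (u : U) :
    BalT.mkHom A M U (e • u) = e • BalT.mkHom A M U u := by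
  ext m
  rw [endOp_smul_hom_apply]
  exact ((Submodule.Quotient.eq (balRel (Module.End A M) A M U)).2
    (Submodule.subset_span ⟨e.unop, m, u, rfl⟩)).symm

/-- The balancing relation `(m · e) ⊗ u = m ⊗ (e · u)` with `e = op s`. -/
theorem BalT.mkHom_end_apply (s : Module.End A M) (u : U) (m : M) :
    BalT.mkHom A M U u (s m) = BalT.mkHom A M U (op s • u) m := by
  rw [BalT.mkHom_smul]; rfl

theorem BalT.induction {p : BalT (Module.End A M) A M U → Prop}
    (x : BalT (Module.End A M) A M U) (h0 : p 0) (h1 : ∀ m u, p (BalT.mkHom A M U u m))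
    (h2 : ∀ x y, p x → p y → p (x + y)) : p x := by
  obtain ⟨t, rfl⟩ := Submodule.Quotient.mk_surjective _ x
  induction t using TensorProduct.induction_on with
  | zero => exact h0
  | tmul m u => exact h1 m u
  | add x y hx hy => exact h2 _ _ hx hy

end

namespace Frame

variable [Fintype ι] (F : Frame A M ι)
include F

theorem hom_ext {N : Type*} [AddCommGroup N] [Module A N] {f g : M →ₗ[A] N}
    (h : f F.w = g F.w) : f = g :=
  LinearMap.ext_on F.span_w (by rintro _ rfl; exact h)

section
variable {U : Type*} [AddCommGroup U] [Module (Module.End A M)ᵐᵒᵖ U]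

/-- Every element of `M ⊗_E U` is a sum `∑ j, i v_j ⊗ u_j`: write `m = ∑ j, a j • s_j w` with
`s_j ∈ End_A(M)` and move the `s_j` across the tensor sign. -/
theorem exists_eq_sum (x : BalT (Module.End A M) A M U) :
    ∃ u : ι → U, x = ∑ j, BalT.mkHom A M U (u j) (F.a j • F.w) := by
  induction x using BalT.induction with
  | h0 => exact ⟨0, by simp⟩
  | h1 m u =>
    choose s hs using fun j => F.exists_end j m
    refine ⟨fun j => op (s j) • u, ?_⟩
    conv_lhs => rw [← F.sum_a_b m]
    simp only [map_sum, map_smul, hs, BalT.mkHom_end_apply]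
  | h2 x y hx hy =>
    obtain ⟨u, rfl⟩ := hx
    obtain ⟨v, rfl⟩ := hy
    exact ⟨u + v, by simp [Finset.sum_add_distrib]⟩

/-- Acting with `b l` extracts the `l`-th coefficient of `∑ j, f j (i v_j)`. -/
theorem b_smul_sum {N : Type*} [AddCommGroup N] [Module A N]
    (f : ι → M →ₗ[A] N) (l : ι) :
    F.b l • ∑ j, f j (F.a j • F.w) = f l F.w := by
  classical
  rw [Finset.smul_sum, Finset.sum_eq_single l]
  · rw [← map_smul, F.b_a_self]
  · intro j _ hj
    rw [← map_smul, F.b_a_ne _ _ hj.symm, map_zero]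
  · simp

/-- `M ⊗_E U` does not collapse: for each `j`, writing `b j • m = s(m) w` with `s(m) ∈ End_A(M)`,
the balanced map `m ⊗ u ↦ s(m) · u` is well defined on `M ⊗_E U` and sends `i v_j ⊗ u` to `u`. -/
theorem eq_zero_of_mk [Nonempty ι] {u : U} (h : BalT.mkHom A M U u F.w = 0) : u = 0 := by
  obtain ⟨j⟩ := ‹Nonempty ι›
  choose s hs using F.exists_end j
  have s_eq : ∀ m (t : Module.End A M), F.b j • m = t F.w → s m = t := fun m t ht =>
    F.hom_ext ((hs m).symm.trans ht)
  let c : M →ₗ[ℤ] U →ₗ[ℤ] U := LinearMap.mk₂ ℤ (fun m u => op (s m) • u)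
    (fun m m' u => by
      rw [s_eq (m + m') (s m + s m') (by rw [smul_add, hs, hs]; rfl), op_add, add_smul])
    (fun z m u => by
      rw [s_eq (z • m) (z • s m) (by rw [smul_comm, hs]; rfl), op_smul, smul_assoc])
    (fun m u u' => smul_add _ _ _)
    (fun z m u => smul_comm _ _ _)
  let L : M ⊗[ℤ] U →ₗ[ℤ] U := TensorProduct.lift c
  have hL : ∀ m u, L (m ⊗ₜ u) = op (s m) • u := fun m u => rfl
  -- The relations are an `A`-span while `L` is only `ℤ`-linear, so vanishing is proved for all
  -- `A`-multiples at once.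
  have key : ∀ x ∈ balRel (Module.End A M) A M U, ∀ a : A, L (a • x) = 0 := by
    intro x hx
    induction hx using Submodule.span_induction with
    | mem x h =>
      obtain ⟨t, m, u, rfl⟩ := h
      intro a
      rw [smul_sub, TensorProduct.smul_tmul', TensorProduct.smul_tmul', map_sub, hL, hL,
        s_eq (a • t • m) (t * s (a • m)) ?_, op_mul, mul_smul, sub_self]
      rw [Module.End.mul_apply, ← hs]
      simp only [Module.End.smul_def, map_smul]
    | zero => simp
    | add x y _ _ hx hy => intro a; rw [smul_add, map_add, hx, hy, add_zero]
    | smul a' x _ hx => intro a; rw [smul_smul]; exact hx _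
  have h' : F.w ⊗ₜ[ℤ] u ∈ balRel (Module.End A M) A M U :=
    (Submodule.Quotient.mk_eq_zero _).1 h
  have := key _ h' (F.a j)
  rwa [TensorProduct.smul_tmul', hL, s_eq (F.a j • F.w) 1 (F.b_a_self j), op_one, one_smul] at this

theorem psi_bijective [Nonempty ι] : Function.Bijective (BalT.mkHom A M U) := by
  constructor
  · rw [injective_iff_map_eq_zero]
    intro u hu
    exact F.eq_zero_of_mk (by rw [hu]; rfl)
  · intro f
    obtain ⟨j⟩ := ‹Nonempty ι›
    obtain ⟨u, hu⟩ := F.exists_eq_sum (f (F.a j • F.w))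
    -- `i v₀ = b j • i v_j`, so `f (i v₀)` is the `j`-th coefficient of `f (i v_j)`.
    refine ⟨u j, F.hom_ext ?_⟩
    rw [← F.b_smul_sum (fun j => BalT.mkHom A M U (u j)), ← hu, ← map_smul, F.b_a_self]

/-- The map `ψ` as an isomorphism of `E`-modules. -/
def psiEquiv [Nonempty ι] (F : Frame A M ι) (U : Type*) [AddCommGroup U]
    [Module (Module.End A M)ᵐᵒᵖ U] :
    U ≃ₗ[(Module.End A M)ᵐᵒᵖ] (M →ₗ[A] BalT (Module.End A M) A M U) :=
  LinearEquiv.ofBijective { BalT.mkHom A M U with map_smul' := BalT.mkHom_smul } F.psi_bijective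

/-- `U` is recovered from `M ⊗_E U` as `Hom_A(M, M ⊗_E U)`. -/
theorem nonempty_linearEquiv [Nonempty ι] {U' : Type*} [AddCommGroup U']
    [Module (Module.End A M)ᵐᵒᵖ U']
    (Θ : BalT (Module.End A M) A M U ≃ₗ[A] BalT (Module.End A M) A M U') :
    Nonempty (U ≃ₗ[(Module.End A M)ᵐᵒᵖ] U') := by
  let Θ' : (M →ₗ[A] BalT (Module.End A M) A M U) ≃ₗ[(Module.End A M)ᵐᵒᵖ]
      (M →ₗ[A] BalT (Module.End A M) A M U') :=
    { toFun := fun f => Θ.toLinearMap ∘ₗ f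
      invFun := fun f => Θ.symm.toLinearMap ∘ₗ f
      map_add' := fun f g => LinearMap.comp_add _ _ _
      map_smul' := fun e f => rfl
      left_inv := fun f => by ext m; simp
      right_inv := fun f => by ext m; simp }
  exact ⟨(F.psiEquiv U).trans (Θ'.trans (F.psiEquiv U').symm)⟩

theorem isSimpleModule_balT [Nonempty ι] [IsSimpleModule (Module.End A M)ᵐᵒᵖ U] :
    IsSimpleModule A (BalT (Module.End A M) A M U) := by
  -- A submodule containing some `i v₀ ⊗ u` with `u ≠ 0` is everything.
  have hgen : ∀ (u : U), u ≠ 0 → ∀ N : Submodule A (BalT (Module.End A M) A M U),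
      BalT.mkHom A M U u F.w ∈ N → N = ⊤ := by
    intro u hu N hN
    have h1 : ∀ m, BalT.mkHom A M U u m ∈ N := by
      intro m
      have hm : m ∈ Submodule.span A {F.w} := F.span_w ▸ Submodule.mem_top
      obtain ⟨a, rfl⟩ := Submodule.mem_span_singleton.1 hm
      rw [map_smul]
      exact N.smul_mem _ hN
    rw [eq_top_iff]
    rintro x -
    induction x using BalT.induction with
    | h0 => exact N.zero_mem
    | h1 m u' =>
      obtain ⟨e, rfl⟩ := IsSimpleModule.toSpanSingleton_surjective (Module.End A M)ᵐᵒᵖ hu u'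
      rw [LinearMap.toSpanSingleton_apply, BalT.mkHom_smul]
      exact h1 _
    | h2 x y hx hy => exact N.add_mem hx hy
  have : Nontrivial U := IsSimpleModule.nontrivial (Module.End A M)ᵐᵒᵖ U
  obtain ⟨u, hu⟩ := exists_ne (0 : U)
  have : Nontrivial (BalT (Module.End A M) A M U) :=
    ⟨_, 0, fun h => hu (F.eq_zero_of_mk h)⟩
  refine { eq_bot_or_eq_top := fun N => ?_ }
  rw [or_iff_not_imp_left]
  intro hN
  obtain ⟨x, hx, hx0⟩ := N.ne_bot_iff.1 hN
  obtain ⟨v, rfl⟩ := F.exists_eq_sum x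
  obtain ⟨j, hj⟩ : ∃ j, v j ≠ 0 := by
    by_contra! h
    exact hx0 (by simp [h])
  refine hgen (v j) hj N ?_
  rw [← F.b_smul_sum (fun j => BalT.mkHom A M U (v j))]
  exact N.smul_mem _ hx

end

section
variable {N : Type*} [AddCommGroup N] [Module A N]

theorem phi_injective : Function.Injective (phiMap A M N) := by
  rw [injective_iff_map_eq_zero]
  intro x hx
  obtain ⟨f, rfl⟩ := F.exists_eq_sum x
  have h1 : ∑ j, f j (F.a j • F.w) = 0 := by
    rw [map_sum] at hx
    exact hx
  have : f = 0 := by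
    funext l
    refine F.hom_ext ?_
    rw [← F.b_smul_sum f l, h1, smul_zero]; rfl
  simp [this]

theorem phi_bijective [IsSimpleModule A N] {f : M →ₗ[A] N} (hf : f ≠ 0) :
    Function.Bijective (phiMap A M N) := by
  refine ⟨F.phi_injective, fun n => ?_⟩
  obtain ⟨m, rfl⟩ := LinearMap.surjective_of_ne_zero hf n
  exact ⟨_, phiMap_mk A M N m f⟩

/-- For `f, g : M → N` with `f ≠ 0`, hence surjective, lift `g (i v_j)` to `m ∈ M`; the
endomorphism `s` with `s w = b j • m` satisfies `g = f ∘ s`. -/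
theorem isSimpleModule_hom [Nonempty ι] [IsSimpleModule A N] {f : M →ₗ[A] N} (hf : f ≠ 0) :
    IsSimpleModule (Module.End A M)ᵐᵒᵖ (M →ₗ[A] N) := by
  rw [isSimpleModule_iff_toSpanSingleton_surjective]
  refine ⟨⟨f, 0, hf⟩, fun f hf g => ?_⟩
  obtain ⟨j⟩ := ‹Nonempty ι›
  obtain ⟨m, hm⟩ := LinearMap.surjective_of_ne_zero hf (g (F.a j • F.w))
  obtain ⟨s, hs⟩ := F.exists_end j m
  refine ⟨op s, F.hom_ext ?_⟩
  rw [LinearMap.toSpanSingleton_apply, endOp_smul_hom_apply]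
  change f (s F.w) = _
  rw [← hs, map_smul, hm, ← map_smul, F.b_a_self]

end

end Frame
end Frame

/-! ### Induced modules of stable simple modules -/

section Induced

variable {k A : Type*} [Field k] [Ring A] [Algebra k A] {B : Subalgebra k A}
  {V : Type*} [AddCommGroup V] [Module B V]

theorem Ind.coe_smul (b : B) (m : Ind B.val.toRingHom V) : b • m = (b : A) • m := rfl

theorem BalT.coe_smul {U : Type*} [AddCommGroup U]
    [Module (Module.End A (Ind B.val.toRingHom V))ᵐᵒᵖ U] (b : B)
    (m : BalT (Module.End A (Ind B.val.toRingHom V)) A (Ind B.val.toRingHom V) U) :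
    b • m = (b : A) • m := rfl

variable (B V) in
/-- The `B`-linear unit `V → V↑`, `v ↦ 1 ⊗ v`. -/
def Ind.ofHom : V →ₗ[B] Ind B.val.toRingHom V where
  toFun := Ind.of _ V
  map_add' v v' := by
    change Submodule.Quotient.mk (1 ⊗ₜ[ℤ] (v + v')) = _
    rw [TensorProduct.tmul_add]; rfl
  map_smul' b v := by
    have h : (1 * (b : A)) ⊗ₜ[ℤ] v - (1 : A) ⊗ₜ[ℤ] (b • v) ∈ indRel B.val.toRingHom V :=
      Submodule.subset_span ⟨1, b, v, rfl⟩
    rw [one_mul, ← mul_one (b : A), ← smul_eq_mul, ← TensorProduct.smul_tmul'] at h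
    exact ((Submodule.Quotient.eq _).2 h).symm

theorem Ind.span_range : Submodule.span A (Set.range (Ind.ofHom B V)) = ⊤ := by
  rw [eq_top_iff]
  rintro x -
  obtain ⟨t, rfl⟩ := Submodule.Quotient.mk_surjective _ x
  induction t using TensorProduct.induction_on with
  | zero => exact Submodule.zero_mem _
  | tmul a v =>
    have : (Submodule.Quotient.mk (a ⊗ₜ[ℤ] v) : Ind B.val.toRingHom V) = a • Ind.ofHom B V v := by
      change _ = Submodule.Quotient.mk (a • ((1 : A) ⊗ₜ[ℤ] v))
      rw [TensorProduct.smul_tmul', smul_eq_mul, mul_one]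
    exact this ▸ Submodule.smul_mem _ _ (Submodule.subset_span ⟨v, rfl⟩)
  | add x y hx hy => exact Submodule.add_mem _ hx hy

/-- Frobenius reciprocity: `Hom_B(V, N) → Hom_A(V↑, N)`.  Compatibility with `B` is a hypothesis
on the underlying additive map, so that no `B`-module structure on `N` has to be fixed. -/
theorem Ind.exists_lift {N : Type*} [AddCommGroup N] [Module A N] (h : V →+ N)
    (hh : ∀ (b : B) v, h (b • v) = (b : A) • h v) :
    ∃ g : Ind B.val.toRingHom V →ₗ[A] N, ∀ v, g (Ind.ofHom B V v) = h v := by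
  let L : A ⊗[ℤ] V →ₗ[A] N := TensorProduct.AlgebraTensorModule.lift
    (LinearMap.toSpanSingleton A (V →ₗ[ℤ] N) h.toIntLinearMap)
  have hL : ∀ a v, L (a ⊗ₜ v) = a • h v := fun a v => rfl
  refine ⟨Submodule.liftQ _ L ?_, fun v => ?_⟩
  · rw [indRel, Submodule.span_le]
    rintro x ⟨s, b, v, rfl⟩
    rw [SetLike.mem_coe, LinearMap.mem_ker, map_sub, hL, hL, hh, ← mul_smul]
    exact sub_self _
  · exact (hL 1 v).trans (one_smul _ _)

variable (k) in
/-- Over an algebraically closed field, a finite-dimensional simple module `V` is absolutely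
simple: `B` maps onto `End_k(V)`. -/
theorem exists_smul_eq [IsAlgClosed k] [Module k V] [IsScalarTower k B V]
    [FiniteDimensional k V] [IsSimpleModule B V] (f : V →ₗ[k] V) :
    ∃ b : B, ∀ v, b • v = f v := by
  classical
  have hend : ∀ e : Module.End B V, ∃ c : k, ∀ v, e v = c • v := fun e => by
    obtain ⟨c, rfl⟩ := (IsSimpleModule.algebraMap_end_bijective_of_isAlgClosed k).2 e
    exact ⟨c, fun v => rfl⟩
  -- By Schur's lemma `End_B(V) = k`, so `f` lies in the double centralizer of `B`.
  let f' : Module.End (Module.End B V) V :=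
    { toFun := f
      map_add' := map_add f
      map_smul' := fun e v => by
        obtain ⟨c, hc⟩ := hend e
        simp [hc] }
  let bs := Module.finBasis k V
  obtain ⟨b, hb⟩ := jacobson_density f' (Finset.univ.image bs)
  refine ⟨b, fun v => ?_⟩
  have : (DistribSMul.toLinearMap k V b) = f := bs.ext fun i =>
    (hb (bs i) (Finset.mem_image_of_mem _ (Finset.mem_univ i))).symm
  exact LinearMap.congr_fun this v

/-- The induced module of a stable simple module has a frame with generator `1 ⊗ v₀`.  Identities
among elements of `B` acting on `V` carry over to `V↑` through `V↑ ≅ V^n`. -/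
theorem exists_frame [IsAlgClosed k] [Module k V] [IsScalarTower k B V]
    [FiniteDimensional k V] [IsSimpleModule B V]
    (hstable : ∃ n : ℕ, Nonempty ((Ind B.val.toRingHom V) ≃ₗ[B] (Fin n → V))) {v₀ : V}
    (hv₀ : v₀ ≠ 0) :
    ∃ F : Frame A (Ind B.val.toRingHom V) (Fin (Module.finrank k V)),
      F.w = Ind.ofHom B V v₀ := by
  obtain ⟨n, ⟨θ⟩⟩ := hstable
  let bs := Module.finBasis k V
  obtain ⟨φ, hφ⟩ : ∃ φ : V →ₗ[k] k, φ v₀ = 1 := Module.Projective.exists_dual_eq_one k hv₀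
  choose a ha using fun j => exists_smul_eq (B := B) k (φ.smulRight (bs j))
  choose b hb using fun j => exists_smul_eq (B := B) k ((bs.coord j).smulRight v₀)
  have ha₀ : ∀ j, a j • v₀ = bs j := fun j => by simp [ha, hφ]
  refine ⟨⟨Ind.ofHom B V v₀, fun j => a j, fun j => b j, ?_, ?_, ?_, ?_, ?_⟩, rfl⟩
  · rw [eq_top_iff, ← Ind.span_range, Submodule.span_le]
    rintro _ ⟨v, rfl⟩
    obtain ⟨c, rfl⟩ := IsSimpleModule.toSpanSingleton_surjective B hv₀ v
    rw [LinearMap.toSpanSingleton_apply, map_smul]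
    exact Submodule.smul_mem _ (c : A) (Submodule.mem_span_singleton_self _)
  · intro j
    rw [← Ind.coe_smul, ← Ind.coe_smul, ← map_smul, ← map_smul, ha₀, hb]
    simp
  · intro j l hjl
    rw [← Ind.coe_smul, ← Ind.coe_smul, ← map_smul, ← map_smul, ha₀, hb]
    rw [LinearMap.smulRight_apply, Module.Basis.coord_apply, bs.repr_self,
      Finsupp.single_eq_of_ne hjl, zero_smul, map_zero]
  · intro m
    simp only [← Ind.coe_smul]
    apply θ.injective
    funext i
    simp only [map_sum, map_smul, Finset.sum_apply, Pi.smul_apply]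
    conv_rhs => rw [← bs.sum_repr (θ m i)]
    refine Finset.sum_congr rfl fun j _ => ?_
    rw [hb, ha]
    simp [hφ]
  · intro j m
    -- With `m ↔ (x_i)` in `V^n`, the element `b j • m ↔ (v_j^*(x_i) v₀)` is the value at `v₀` of the
    -- `B`-linear map `v ↦ (v_j^*(x_i) v)`, which extends to an endomorphism of `V↑`.
    let h : V →ₗ[B] Ind B.val.toRingHom V :=
      θ.symm.toLinearMap ∘ₗ LinearMap.pi fun i => bs.coord j (θ m i) • LinearMap.id
    obtain ⟨s, hs⟩ := Ind.exists_lift (B := B) h.toAddMonoidHom (fun b v => map_smul h b v)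
    refine ⟨s, ?_⟩
    rw [hs, ← Ind.coe_smul]
    apply θ.injective
    funext i
    rw [map_smul, Pi.smul_apply, hb]
    exact congr_fun (θ.apply_symm_apply fun i => bs.coord j (θ m i) • v₀) i |>.symm

end Induced

/-! ### The correspondence -/

/-- (Stable Clifford correspondence.)  Let `k` be
algebraically closed, `B ⊆ A` algebras over `k`, `V` a finite-dimensional simple
`A`-stable `B`-module, `E = End_A(V↑^A)ᵒᵖ`.  There is a one-to-one
correspondence, induced by `U ↦ V↑^A ⊗_E U`, between isomorphism classes of
finite-dimensional simple `E`-modules and isomorphism classes of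
finite-dimensional simple `A`-modules containing a copy of `V` on restriction to
`B`: the functor carries the first class into the second (with inverse given by
`N ↦ Hom_A(V↑^A, N)`, via the canonical maps `ψ` and `φ`), and it reflects
isomorphism. -/
theorem stmt_11 (k : Type*) [Field k] [IsAlgClosed k]
    (A : Type*) [Ring A] [Algebra k A] (B : Subalgebra k A)
    (V : Type*) [AddCommGroup V] [Module k V] [Module ↥B V] [IsScalarTower k ↥B V]
    [FiniteDimensional k V] [IsSimpleModule ↥B V]
    (hstable : ∃ n : ℕ, Nonempty ((Ind B.val.toRingHom V) ≃ₗ[↥B] (Fin n → V))) :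
    (∀ (U : Type u) [AddCommGroup U]
        [Module (Module.End A (Ind B.val.toRingHom V))ᵐᵒᵖ U] [Module k U]
        [FiniteDimensional k U]
        [IsSimpleModule (Module.End A (Ind B.val.toRingHom V))ᵐᵒᵖ U],
      (∀ (c : k) (e : (Module.End A (Ind B.val.toRingHom V))ᵐᵒᵖ) (u : U),
          (c • e) • u = c • (e • u)) →
        (IsSimpleModule A
            (BalT (Module.End A (Ind B.val.toRingHom V)) A (Ind B.val.toRingHom V) U) ∧
          FiniteDimensional k
            (BalT (Module.End A (Ind B.val.toRingHom V)) A (Ind B.val.toRingHom V) U) ∧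
          (∃ g : V →ₗ[↥B]
              (BalT (Module.End A (Ind B.val.toRingHom V)) A (Ind B.val.toRingHom V) U),
            Function.Injective g) ∧
          Function.Bijective (psiMap A (Ind B.val.toRingHom V) U))) ∧
    (∀ (N : Type u) [AddCommGroup N] [Module A N] [Module k N] [IsScalarTower k A N]
        [FiniteDimensional k N] [IsSimpleModule A N],
      (∃ g : V →ₗ[↥B] N, Function.Injective g) →
        (IsSimpleModule (Module.End A (Ind B.val.toRingHom V))ᵐᵒᵖ
            ((Ind B.val.toRingHom V) →ₗ[A] N) ∧
          Function.Bijective (phiMap A (Ind B.val.toRingHom V) N))) ∧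
    (∀ (U₁ U₂ : Type u) [AddCommGroup U₁] [AddCommGroup U₂]
        [Module (Module.End A (Ind B.val.toRingHom V))ᵐᵒᵖ U₁]
        [Module (Module.End A (Ind B.val.toRingHom V))ᵐᵒᵖ U₂]
        [IsSimpleModule (Module.End A (Ind B.val.toRingHom V))ᵐᵒᵖ U₁]
        [IsSimpleModule (Module.End A (Ind B.val.toRingHom V))ᵐᵒᵖ U₂],
      Nonempty
          ((BalT (Module.End A (Ind B.val.toRingHom V)) A (Ind B.val.toRingHom V) U₁)
            ≃ₗ[A]
           (BalT (Module.End A (Ind B.val.toRingHom V)) A (Ind B.val.toRingHom V) U₂)) →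
        Nonempty (U₁ ≃ₗ[(Module.End A (Ind B.val.toRingHom V))ᵐᵒᵖ] U₂)) := by
  have : Nontrivial V := IsSimpleModule.nontrivial B V
  obtain ⟨v₀, hv₀⟩ := exists_ne (0 : V)
  obtain ⟨F, hF⟩ := exists_frame (k := k) hstable hv₀
  have : Nonempty (Fin (Module.finrank k V)) := ⟨⟨0, Module.finrank_pos⟩⟩
  refine ⟨?_, ?_, ?_⟩
  · intro U _ _ _ _ _ hU
    refine ⟨F.isSimpleModule_balT, ?_, ?_, F.psi_bijective⟩
    · -- The compatible `k`-structures make `(u_j) ↦ ∑ j, i v_j ⊗ u_j` a `k`-linear surjection.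
      have hsm : ∀ (c : k) u m, BalT.mkHom A (Ind B.val.toRingHom V) U (c • u) m =
          c • BalT.mkHom A (Ind B.val.toRingHom V) U u m := by
        intro c u m
        rw [← one_smul (Module.End A (Ind B.val.toRingHom V))ᵐᵒᵖ u, ← hU, BalT.mkHom_smul,
          endOp_smul_hom_apply, one_smul]
        rfl
      let L : (Fin (Module.finrank k V) → U) →ₗ[k]
          BalT (Module.End A (Ind B.val.toRingHom V)) A (Ind B.val.toRingHom V) U :=
        { toFun := fun u => ∑ j, BalT.mkHom A _ U (u j) (F.a j • F.w)
          map_add' := fun u u' => by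
            simp only [Pi.add_apply, map_add, LinearMap.add_apply, Finset.sum_add_distrib]
          map_smul' := fun c u => by
            simp only [Pi.smul_apply, hsm, Finset.smul_sum, RingHom.id_apply] }
      refine Module.Finite.of_surjective L fun x => ?_
      obtain ⟨u, rfl⟩ := F.exists_eq_sum x
      exact ⟨u, rfl⟩
    · have : Nontrivial U :=
        IsSimpleModule.nontrivial (Module.End A (Ind B.val.toRingHom V))ᵐᵒᵖ U
      obtain ⟨u, hu⟩ := exists_ne (0 : U)
      let g : V →ₗ[B]
          BalT (Module.End A (Ind B.val.toRingHom V)) A (Ind B.val.toRingHom V) U :=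
        { toFun := fun v => BalT.mkHom A _ U u (Ind.ofHom B V v)
          map_add' := fun v v' => by simp only [map_add]
          map_smul' := fun b v => by
            rw [map_smul, Ind.coe_smul, map_smul]; rfl }
      refine ⟨g, LinearMap.injective_of_ne_zero fun h => hu (F.eq_zero_of_mk ?_)⟩
      rw [hF]
      exact LinearMap.congr_fun h v₀
  · rintro N _ _ _ _ _ _ ⟨g, hg⟩
    obtain ⟨f, hf⟩ := Ind.exists_lift (B := B) g.toAddMonoidHom (fun b v => map_smul g b v)
    have hf0 : f ≠ 0 := by
      rintro rfl
      exact hv₀ (hg ((hf v₀).symm.trans (map_zero g).symm))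
    exact ⟨F.isSimpleModule_hom hf0, F.phi_bijective hf0⟩
  · rintro U₁ U₂ _ _ _ _ _ _ ⟨Θ⟩
    exact F.nonempty_linearEquiv Θ
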